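/- Let n ≥ 2 be an integer and let p = 2m + 1 ≥ 3 be an odd integer. Then for all k ≥ 0, s_m(n) divides s_{k+p}(n) − s_k(n); and s_m(n) divides s_k(n) if and only if k ≡ m (mod p). -/

import Mathlib

/-! Modulo `s n m` the sequence is antisymmetric about the index `m`, since the recurrence is
invariant under reversing the index and `s n m ≡ 0` (`s_reflect`). Reflecting the initial values
`s 0, s 1` gives `s (2m+1) ≡ s 0` and `s (2m+2) ≡ s 1`, hence period `2m+1` (`s_period`).
For `n ≥ 2` the sequence is positive and strictly increasing, so `s m` divides no `s j` with
`j < m`, and by reflection no `s j` with `m < j ≤ 2m`; periodicity then settles every index. -/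

/-- The sequence `s_k(n)`: `s_0 = 1`, `s_1 = n + 1`, `s_{k+2} = n·s_{k+1} − s_k`. -/
def s (n : ℤ) : ℕ → ℤ
  | 0 => 1
  | 1 => n + 1
  | k + 2 => n * s n (k + 1) - s n k

/-- The sequence `r_k(n)`: `r_0 = 1`, `r_1 = n − 1`, `r_{k+2} = n·r_{k+1} − r_k`. -/
def r (n : ℤ) : ℕ → ℤ
  | 0 => 1
  | 1 => n - 1
  | k + 2 => n * r n (k + 1) - r n k

/-- Dilated Chebyshev polynomials of the first kind: `T_0 = 2`, `T_1 = n`. -/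
def T (n : ℤ) : ℕ → ℤ
  | 0 => 2
  | 1 => n
  | k + 2 => n * T n (k + 1) - T n k

/-- Dilated Chebyshev polynomials of the second kind: `U_0 = 1`, `U_1 = n`. -/
def U (n : ℤ) : ℕ → ℤ
  | 0 => 1
  | 1 => n
  | k + 2 => n * U n (k + 1) - U n k

lemma s_rec (n : ℤ) (k : ℕ) : s n (k + 2) = n * s n (k + 1) - s n k := rfl

lemma s_pos_lt (n : ℤ) (hn : 2 ≤ n) (k : ℕ) : 0 < s n k ∧ s n k < s n (k + 1) := by
  induction k with
  | zero => simp [s]; omega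
  | succ k ih =>
    refine ⟨ih.1.trans ih.2, ?_⟩
    rw [s_rec]
    nlinarith [ih.1, ih.2]

lemma s_strictMono (n : ℤ) (hn : 2 ≤ n) : StrictMono (s n) :=
  strictMono_nat_of_lt_succ fun k => (s_pos_lt n hn k).2

lemma s_not_dvd_of_lt (n : ℤ) (hn : 2 ≤ n) {j m : ℕ} (h : j < m) : ¬ s n m ∣ s n j := fun hd =>
  absurd (Int.le_of_dvd (s_pos_lt n hn j).1 hd) (not_le.mpr (s_strictMono n hn h))

/-- Modulo `s n m` the sequence is antisymmetric about `m`; here `j = m - i`. -/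
lemma s_reflect (n : ℤ) (m i : ℕ) : ∀ j, m = j + i → s n m ∣ s n (m + i) + s n j := by
  induction i using Nat.twoStepInduction with
  | zero =>
    rintro j rfl
    exact ⟨2, by simp only [add_zero]; ring⟩
  | one =>
    rintro j rfl
    exact ⟨n, by rw [add_assoc, s_rec]; ring⟩
  | more i ih0 ih1 =>
    intro j hj
    have h0 := ih0 (j + 2) (by omega)
    have h1 := ih1 (j + 1) (by omega)
    have e : s n (m + (i + 2)) + s n j
        = n * (s n (m + (i + 1)) + s n (j + 1)) - (s n (m + i) + s n (j + 2)) := by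
      rw [← add_assoc, s_rec, s_rec, ← add_assoc]
      ring
    rw [e]
    exact dvd_sub (h1.mul_left n) h0

lemma s_period (n : ℤ) (m : ℕ) (hm : 1 ≤ m) (k : ℕ) :
    s n m ∣ s n (k + (2 * m + 1)) - s n k := by
  obtain ⟨l, rfl⟩ : ∃ l, m = l + 1 := ⟨m - 1, by omega⟩
  have hA := s_reflect n (l + 1) (l + 1) 0 (by omega)
  have hB := s_reflect n (l + 1) l 1 (by omega)
  rw [show l + 1 + (l + 1) = 2 * l + 2 by ring] at hA
  rw [show l + 1 + l = 2 * l + 1 by ring] at hB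
  have s0 : s n 0 = 1 := rfl
  have s1 : s n 1 = n + 1 := rfl
  have e3 : s n (2 * l + 3) = n * s n (2 * l + 2) - s n (2 * l + 1) := rfl
  have e4 : s n (2 * l + 4) = n * s n (2 * l + 3) - s n (2 * l + 2) := rfl
  have h0 : s n (l + 1) ∣ s n (2 * l + 3) - s n 0 := by
    rw [show s n (2 * l + 3) - s n 0
      = n * (s n (2 * l + 2) + s n 0) - (s n (2 * l + 1) + s n 1) by rw [e3, s0, s1]; ring]
    exact dvd_sub (hA.mul_left n) hB
  induction k using Nat.twoStepInduction with
  | zero =>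
    rw [show 0 + (2 * (l + 1) + 1) = 2 * l + 3 by ring]
    exact h0
  | one =>
    rw [show 1 + (2 * (l + 1) + 1) = 2 * l + 4 by ring,
      show s n (2 * l + 4) - s n 1
        = n * (s n (2 * l + 3) - s n 0) - (s n (2 * l + 2) + s n 0) by rw [e4, s0, s1]; ring]
    exact dvd_sub (h0.mul_left n) hA
  | more k ih0 ih1 =>
    rw [show k + 2 + (2 * (l + 1) + 1) = k + (2 * (l + 1) + 1) + 2 by ring,
      s_rec n (k + _), s_rec n k]
    rw [show k + 1 + (2 * (l + 1) + 1) = k + (2 * (l + 1) + 1) + 1 by ring] at ih1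
    have e := dvd_sub (ih1.mul_left n) ih0
    rw [show ∀ a b c d : ℤ, n * a - b - (n * c - d) = n * (a - c) - (b - d) by intros; ring]
    exact e

lemma s_dvd_iff (n : ℤ) (hn : 2 ≤ n) (m : ℕ) (hm : 1 ≤ m) (k : ℕ) :
    s n m ∣ s n k ↔ k ≡ m [MOD 2 * m + 1] := by
  induction k using Nat.strong_induction_on with
  | _ k ih =>
    rcases lt_or_ge k (2 * m + 1) with hk | hk
    · have hR : k ≡ m [MOD 2 * m + 1] ↔ k = m := by
        rw [Nat.ModEq, Nat.mod_eq_of_lt hk, Nat.mod_eq_of_lt (by omega)]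
      rw [hR]
      refine ⟨fun hd => ?_, by rintro rfl; exact dvd_rfl⟩
      rcases lt_trichotomy k m with h | h | h
      · exact absurd hd (s_not_dvd_of_lt n hn h)
      · exact h
      · have hr := s_reflect n m (k - m) (2 * m - k) (by omega)
        rw [show m + (k - m) = k by omega] at hr
        exact absurd ((dvd_add_right hd).mp hr) (s_not_dvd_of_lt n hn (by omega))
    · obtain ⟨j, rfl⟩ : ∃ j, k = j + (2 * m + 1) := ⟨k - (2 * m + 1), by omega⟩
      have hj := ih j (by omega)
      rw [dvd_iff_dvd_of_dvd_sub (s_period n m hm j), hj]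
      simp [Nat.ModEq]

theorem s_periodicity_mod_term (n : ℤ) (hn : 2 ≤ n) (m : ℕ) (hm : 1 ≤ m) (k : ℕ) :
    (s n m ∣ s n (k + (2 * m + 1)) - s n k) ∧
    (s n m ∣ s n k ↔ k ≡ m [MOD 2 * m + 1]) := by
  exact ⟨s_period n m hm k, s_dvd_iff n hn m hm k⟩
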